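/- arXiv:2009.11479 — 3 statements merged into one kernel-verified Lean document; each statement's English description precedes it below -/
import Mathlib

section
/- Let p ≥ 2 and k ≥ 1 be integers and define h_p : ℝ → ℝ by h_p(x) = max(0, p·x) + Σ_{i=2}^{p} (−1)^{i−1}·max(0, 2p·x − 2(i−1)). Let h_p^[k] denote the k-fold composition of h_p with itself, and let μ denote Lebesgue measure on ℝ. Then for every measurable set U ⊆ [0, 1] with μ(U) > p^{−k}, there is no affine function φ : ℝ → ℝ (φ(x) = a·x + b) such that h_p^[k](x) = φ(x) for all x ∈ U. -/
/-!
On `[0, 1]` the value `h_p x` is the distance from `p x` to `2ℤ`, that is, the norm of `p x` in the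
circle `ℝ / 2ℤ`. Since `‖z‖` represents `z` or `-z`, the norm semiconjugates multiplication by `p`
on the circle to `h_p`, and therefore `h_p^[k] x = ‖p ^ k x‖`. Where this equals `a x + b`, either
`(a - p ^ k) x + b` or `(a + p ^ k) x + b` lies in `2ℤ`, which leaves only countably many `x` unless
`a = ± p ^ k`; in that case `0 ≤ a x + b ≤ 1` confines `x` to an interval of length `p ^ (-k)`.
-/

open MeasureTheory ENNReal

/-- The one-dimensional sawtooth map from the proof of Lemma 2:
`h_p(x) = max(0, p·x) + Σ_{i=2}^{p} (−1)^{i−1} · max(0, 2p·x − 2(i−1))`. -/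
noncomputable def sawtooth (p : ℕ) (x : ℝ) : ℝ :=
  max 0 (p * x) + ∑ i ∈ Finset.Icc 2 p, (-1 : ℝ) ^ (i - 1) * max 0 (2 * p * x - 2 * ((i : ℝ) - 1))

section Circle

variable {T : ℝ}

lemma coe_norm_eq_or_eq_neg (z : AddCircle T) :
    ((‖z‖ : ℝ) : AddCircle T) = z ∨ ((‖z‖ : ℝ) : AddCircle T) = -z := by
  induction z using QuotientAddGroup.induction_on with | H x => ?_
  have coe_representative :
      ((x - round (T⁻¹ * x) * T : ℝ) : AddCircle T) = (x : AddCircle T) := by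
    rw [← zsmul_eq_mul, AddCircle.coe_sub, AddCircle.coe_zsmul, AddCircle.coe_period, smul_zero,
      sub_zero]
  rw [AddCircle.norm_eq]
  refine (abs_choice (x - round (T⁻¹ * x) * T)).imp (fun h ↦ ?_) fun h ↦ ?_
  · rw [h, coe_representative]
  · rw [h, AddCircle.coe_neg, coe_representative]

lemma norm_nsmul_coe_norm (n : ℕ) (z : AddCircle T) :
    ‖n • ((‖z‖ : ℝ) : AddCircle T)‖ = ‖n • z‖ := by
  rcases coe_norm_eq_or_eq_neg z with h | h <;> simp only [h, smul_neg, norm_neg]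

lemma norm_mem_Icc_half_period (hT : T ≠ 0) (z : AddCircle T) : ‖z‖ ∈ Set.Icc 0 (|T| / 2) :=
  ⟨norm_nonneg z, AddCircle.norm_le_half_period T hT⟩

lemma norm_coe_of_mem_Icc {x : ℝ} (hx : x ∈ Set.Icc 0 (|T| / 2)) : ‖(x : AddCircle T)‖ = x := by
  have abs_x : |x| = x := abs_of_nonneg hx.1
  rcases eq_or_ne T 0 with rfl | hT
  · rw [AddCircle.norm_eq_of_zero, abs_x]
  · rw [(AddCircle.norm_coe_eq_abs_iff T hT).2 (abs_x.trans_le hx.2), abs_x]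

lemma norm_sub_half_period (hT : 0 < T) (z : AddCircle T) :
    ‖z - ((T / 2 : ℝ) : AddCircle T)‖ = T / 2 - ‖z‖ := by
  have norm_half_sub : ‖((T / 2 : ℝ) : AddCircle T) - (‖z‖ : ℝ)‖ = T / 2 - ‖z‖ := by
    obtain ⟨norm_ge, norm_le⟩ := norm_mem_Icc_half_period hT.ne' z
    rw [abs_of_pos hT] at norm_le
    rw [← AddCircle.coe_sub]
    exact norm_coe_of_mem_Icc ⟨by linarith, by rw [abs_of_pos hT]; linarith⟩
  have neg_half : -((T / 2 : ℝ) : AddCircle T) = ((T / 2 : ℝ) : AddCircle T) := by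
    rw [neg_eq_iff_add_eq_zero, ← AddCircle.coe_add, add_halves, AddCircle.coe_period]
  rcases coe_norm_eq_or_eq_neg z with h | h
  · rw [norm_sub_rev, ← norm_half_sub, h]
  · rw [← norm_half_sub, h, sub_neg_eq_add, add_comm, sub_eq_add_neg, neg_half]

end Circle

section AffineLevelSets

variable {T N a : ℝ}

lemma countable_setOf_coe_mul_add_eq_zero (T : ℝ) {c : ℝ} (hc : c ≠ 0) (b : ℝ) :
    {x : ℝ | ((c * x + b : ℝ) : AddCircle T) = 0}.Countable := by
  have countable_multiples : {y : ℝ | (y : AddCircle T) = 0}.Countable := by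
    simp only [AddCircle.coe_eq_zero_iff]
    exact Set.countable_range fun n : ℤ ↦ n • T
  exact countable_multiples.preimage ((add_left_injective b).comp (mul_right_injective₀ hc))

lemma countable_setOf_norm_coe_mul_eq_affine (T : ℝ) (ha : a ≠ N) (ha' : a ≠ -N) (b : ℝ) :
    {x : ℝ | ‖((N * x : ℝ) : AddCircle T)‖ = a * x + b}.Countable := by
  refine ((countable_setOf_coe_mul_add_eq_zero T (sub_ne_zero.2 ha) b).union
    (countable_setOf_coe_mul_add_eq_zero T (sub_ne_zero.2 ha') b)).mono fun x hx ↦ ?_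
  rw [Set.mem_ofPred_eq] at hx
  have coe_affine := coe_norm_eq_or_eq_neg ((N * x : ℝ) : AddCircle T)
  rw [hx, ← sub_eq_zero, ← AddCircle.coe_sub, ← add_eq_zero_iff_eq_neg, ← AddCircle.coe_add]
    at coe_affine
  refine coe_affine.imp (fun h ↦ ?_) fun h ↦ ?_
  · rwa [Set.mem_ofPred_eq, sub_mul, sub_add_eq_add_sub]
  · rwa [Set.mem_ofPred_eq, sub_neg_eq_add, add_mul, add_right_comm]

lemma volume_preimage_affine (ha : a ≠ 0) (b : ℝ) (s : Set ℝ) :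
    volume ((fun x ↦ a * x + b) ⁻¹' s) = ENNReal.ofReal |a⁻¹| * volume s := by
  rw [← measure_preimage_add_right volume b s, ← Real.volume_preimage_mul_left ha]
  rfl

lemma volume_setOf_norm_coe_mul_eq_affine_le (hT : T ≠ 0) (hN : N ≠ 0) (a b : ℝ) :
    volume {x : ℝ | ‖((N * x : ℝ) : AddCircle T)‖ = a * x + b} ≤
      ENNReal.ofReal |N⁻¹| * ENNReal.ofReal (|T| / 2) := by
  by_cases ha : |a| = |N|
  · have ha₀ : a ≠ 0 := by rwa [← abs_pos, ha, abs_pos]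
    calc volume {x : ℝ | ‖((N * x : ℝ) : AddCircle T)‖ = a * x + b}
        ≤ volume ((fun x ↦ a * x + b) ⁻¹' Set.Icc 0 (|T| / 2)) :=
          measure_mono fun x (hx : _ = a * x + b) ↦
            Set.mem_preimage.2 <| hx.symm ▸ norm_mem_Icc_half_period hT _
      _ = ENNReal.ofReal |N⁻¹| * ENNReal.ofReal (|T| / 2) := by
          rw [volume_preimage_affine ha₀, Real.volume_Icc, sub_zero, abs_inv, abs_inv, ha]
  · obtain ⟨ha₁, ha₂⟩ := not_or.1 (mt abs_eq_abs.2 ha)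
    rw [(countable_setOf_norm_coe_mul_eq_affine T ha₁ ha₂ b).measure_zero]
    exact zero_le

end AffineLevelSets

lemma add_alternating_sum_ramps_eq_norm_of_le_one (n : ℕ) {y : ℝ} (hy₀ : 0 ≤ y) (hy₁ : y ≤ 1) :
    y + ∑ j ∈ Finset.range n, (-1 : ℝ) ^ (j + 1) * max 0 (2 * (y - (j + 1))) =
      ‖(y : AddCircle (2 : ℝ))‖ := by
  have ramp_eq_zero (j : ℕ) : max 0 (2 * (y - (j + 1))) = 0 :=
    max_eq_left (by linarith [j.cast_nonneg (α := ℝ)])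
  simp only [ramp_eq_zero, mul_zero, Finset.sum_const_zero, add_zero]
  exact (norm_coe_of_mem_Icc ⟨hy₀, by simpa using hy₁⟩).symm

lemma alternating_sum_ramps_succ (n : ℕ) (y : ℝ) :
    ∑ j ∈ Finset.range (n + 1), (-1 : ℝ) ^ (j + 1) * max 0 (2 * (y - (j + 1))) =
      -max 0 (2 * (y - 1)) -
        ∑ j ∈ Finset.range n, (-1 : ℝ) ^ (j + 1) * max 0 (2 * (y - 1 - (j + 1))) := by
  rw [Finset.sum_range_succ', sub_eq_add_neg (-max _ _), ← Finset.sum_neg_distrib, add_comm]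
  congr 1
  · simp
  · refine Finset.sum_congr rfl fun j _ ↦ ?_
    rw [pow_succ (-1 : ℝ) (j + 1), mul_neg_one, neg_mul, Nat.cast_succ, sub_sub y 1, add_comm 1]

-- By `alternating_sum_ramps_succ`, for `y ≥ 1` the left-hand sides for `(n + 1, y)` and
-- `(n, y - 1)` add up to `1`; so do the norms, since `1` is the half period.
lemma add_alternating_sum_ramps_eq_norm (n : ℕ) {y : ℝ} (hy₀ : 0 ≤ y) (hy : y ≤ n + 1) :
    y + ∑ j ∈ Finset.range n, (-1 : ℝ) ^ (j + 1) * max 0 (2 * (y - (j + 1))) =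
      ‖(y : AddCircle (2 : ℝ))‖ := by
  induction n generalizing y with
  | zero => exact add_alternating_sum_ramps_eq_norm_of_le_one 0 hy₀ (by simpa using hy)
  | succ n ih =>
    rcases le_total y 1 with hy₁ | hy₁
    · exact add_alternating_sum_ramps_eq_norm_of_le_one (n + 1) hy₀ hy₁
    have norm_shift : ‖((y - 1 : ℝ) : AddCircle (2 : ℝ))‖ = 1 - ‖(y : AddCircle (2 : ℝ))‖ := by
      simpa using norm_sub_half_period two_pos (y : AddCircle (2 : ℝ))
    have ih_shift := ih (y := y - 1) (by linarith) (by push_cast at hy; linarith)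
    rw [alternating_sum_ramps_succ, max_eq_right (by linarith)]
    linarith

lemma sawtooth_eq_norm (p : ℕ) {x : ℝ} (hx : x ∈ Set.Icc 0 1) :
    sawtooth p x = ‖((p * x : ℝ) : AddCircle (2 : ℝ))‖ := by
  have hpx₀ : 0 ≤ p * x := mul_nonneg p.cast_nonneg hx.1
  have hpx : p * x ≤ (p - 1 : ℕ) + 1 :=
    (mul_le_of_le_one_right p.cast_nonneg hx.2).trans (by exact_mod_cast le_tsub_add)
  rw [← add_alternating_sum_ramps_eq_norm (p - 1) hpx₀ hpx, sawtooth, max_eq_right hpx₀,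
    ← Finset.Ico_succ_right_eq_Icc, Finset.sum_Ico_eq_sum_range]
  congr 1
  refine Finset.sum_congr rfl fun j _ ↦ ?_
  rw [show 2 + j - 1 = j + 1 by omega]
  push_cast
  ring_nf

lemma semiconj_norm_nsmul_sawtooth (p : ℕ) :
    Function.Semiconj (fun z : AddCircle (2 : ℝ) ↦ ‖z‖) (p • ·) (sawtooth p) := fun z ↦ by
  have norm_mem : ‖z‖ ∈ Set.Icc (0 : ℝ) 1 := by
    simpa using norm_mem_Icc_half_period two_ne_zero z
  rw [sawtooth_eq_norm p norm_mem, ← nsmul_eq_mul, AddCircle.coe_nsmul,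
    norm_nsmul_coe_norm]

lemma sawtooth_iterate_eq_norm (p k : ℕ) {x : ℝ} (hx : x ∈ Set.Icc 0 1) :
    (sawtooth p)^[k] x = ‖((p ^ k * x : ℝ) : AddCircle (2 : ℝ))‖ := by
  have norm_x : ‖(x : AddCircle (2 : ℝ))‖ = x := norm_coe_of_mem_Icc (by simpa using hx)
  calc (sawtooth p)^[k] x
      = (sawtooth p)^[k] ‖(x : AddCircle (2 : ℝ))‖ := by rw [norm_x]
    _ = ‖(p • ·)^[k] (x : AddCircle (2 : ℝ))‖ :=
        ((semiconj_norm_nsmul_sawtooth p).iterate_right k x).symm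
    _ = ‖((p ^ k * x : ℝ) : AddCircle (2 : ℝ))‖ := by
        rw [smul_iterate_apply, ← AddCircle.coe_nsmul, nsmul_eq_mul, Nat.cast_pow]

theorem sawtooth_iterate_not_affine_on_large_sets_general {p : ℕ} (hp : p ≠ 0) (k : ℕ) {U : Set ℝ}
    (hU : U ⊆ Set.Icc 0 1) {a b : ℝ} (hab : ∀ x ∈ U, (sawtooth p)^[k] x = a * x + b) :
    volume U ≤ ((p : ℝ≥0∞) ^ k)⁻¹ := by
  have hpk : (0 : ℝ) < p ^ k := by positivity
  calc volume U
      ≤ volume {x : ℝ | ‖((p ^ k * x : ℝ) : AddCircle (2 : ℝ))‖ = a * x + b} :=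
        measure_mono fun x hx ↦ (sawtooth_iterate_eq_norm p k (hU hx)).symm.trans (hab x hx)
    _ ≤ ENNReal.ofReal |((p : ℝ) ^ k)⁻¹| * ENNReal.ofReal (|2| / 2) :=
        volume_setOf_norm_coe_mul_eq_affine_le two_ne_zero hpk.ne' a b
    _ = ((p : ℝ≥0∞) ^ k)⁻¹ := by
        rw [abs_two, div_self two_ne_zero, ENNReal.ofReal_one, mul_one, abs_inv, abs_of_pos hpk,
          ENNReal.ofReal_inv_of_pos hpk, ENNReal.ofReal_pow p.cast_nonneg, ENNReal.ofReal_natCast]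

/-- The `k`-fold composition of the sawtooth `h_p` (with `p ≥ 2`) agrees with no affine
function on any measurable subset of `[0, 1]` of Lebesgue measure exceeding `p^{-k}`:
its fineness of linear regions is `p^{-k}`. -/
theorem sawtooth_iterate_not_affine_on_large_sets (p : ℕ) (hp : 2 ≤ p) (k : ℕ) (hk : 1 ≤ k) :
    ∀ U : Set ℝ, U ⊆ Set.Icc (0 : ℝ) 1 → MeasurableSet U →
      ((p : ℝ≥0∞) ^ k)⁻¹ < volume U →
      ¬ ∃ a b : ℝ, ∀ x ∈ U, (sawtooth p)^[k] x = a * x + b := by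
  rintro U hU - hvol ⟨a, b, hab⟩
  exact hvol.not_ge (sawtooth_iterate_not_affine_on_large_sets_general (by omega) k hU hab)
end

section
/- Let p ≥ 1 and n ≥ 1 be integers, define h_p : ℝ → ℝ by h_p(x) = max(0, p·x) + Σ_{i=2}^{p} (−1)^{i−1}·max(0, 2p·x − 2(i−1)), and define H_p : ℝⁿ → ℝⁿ coordinatewise by (H_p(x))_j = h_p(x_j). Then for every function t : {1,…,n} → {0,…,p−1}, there exists an affine map A : ℝⁿ → ℝⁿ such that H_p(x) = A(x) for all x in the hypercube ∏_{j=1}^{n} [t_j/p, (t_j+1)/p], and the image of this hypercube under H_p equals [0, 1]ⁿ. -/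
/-- The `n`-dimensional sawtooth layer, applying `h_p` to each coordinate. -/
noncomputable def sawtoothLayer (p n : ℕ) (x : Fin n → ℝ) : Fin n → ℝ :=
  fun j => sawtooth p (x j)

/-!
Write `y = p * x`. On `t ≤ y ≤ t + 1` exactly the hinges with `i ≤ t + 1` are active, and the
partial sums of the slopes `1, -2, 2, -2, …` alternate between `1` and `-1`, so `h_p` coincides
there with the affine map `1 / 2 + (-1) ^ t * (y - t - 1 / 2)`. This map sends the two endpoints to
`0` and `1` in an order decided by the parity of `t`, hence the whole interval onto
`[0, 1]`.
-/

open Set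

theorem sum_mul_max_zero_eq_sum_of_subset {ι R : Type*} [NonUnitalNonAssocSemiring R]
    [LinearOrder R] {s u : Finset ι} (hus : u ⊆ s) (c f : ι → R)
    (hnonneg : ∀ i ∈ u, 0 ≤ f i) (hnonpos : ∀ i ∈ s, i ∉ u → f i ≤ 0) :
    ∑ i ∈ s, c i * max 0 (f i) = ∑ i ∈ u, c i * f i := by
  rw [← Finset.sum_subset hus fun i hi hiu ↦ by rw [max_eq_left (hnonpos i hi hiu), mul_zero]]
  exact Finset.sum_congr rfl fun i hi ↦ by rw [max_eq_right (hnonneg i hi)]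

theorem add_sum_alternating_hinges {K : Type*} [Field K] [NeZero (2 : K)] (y : K) (t : ℕ) :
    y + ∑ i ∈ Finset.Icc 2 (t + 1), (-1) ^ (i - 1) * (2 * y - 2 * ((i : K) - 1)) =
      1 / 2 + (-1) ^ t * (y - t - 1 / 2) := by
  have half_add_half : (1 / 2 : K) + 1 / 2 = 1 := add_halves 1
  induction t with
  | zero => simp
  | succ t ih =>
    rw [Finset.sum_Icc_succ_top (by lia), ← add_assoc, ih, Nat.add_sub_cancel]
    push_cast
    linear_combination (-(-1) ^ t) * half_add_half

/-- The affine map whose graph contains the `t`-th linear piece of `sawtooth p`, the one over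
`[t / p, (t + 1) / p]`; pieces are counted from `0`. -/
noncomputable def sawtoothBranch (p t : ℕ) : ℝ →ᵃ[ℝ] ℝ :=
  AffineMap.const ℝ ℝ (1 / 2) +
    (-1 : ℝ) ^ t • ((p : ℝ) • AffineMap.id ℝ ℝ - AffineMap.const ℝ ℝ ((t : ℝ) + 1 / 2))

theorem sawtoothBranch_apply (p t : ℕ) (x : ℝ) :
    sawtoothBranch p t x = 1 / 2 + (-1) ^ t * (p * x - t - 1 / 2) := by
  simp [sawtoothBranch, sub_sub]

theorem sawtooth_eqOn_sawtoothBranch {p t : ℕ} (ht : t < p) :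
    EqOn (sawtooth p) (sawtoothBranch p t) (Icc ((t : ℝ) / p) (((t : ℝ) + 1) / p)) := by
  rintro x ⟨hlower, hupper⟩
  have hp : (0 : ℝ) < p := by exact_mod_cast ht.pos
  replace hlower : (t : ℝ) ≤ p * x := (div_le_iff₀' hp).mp hlower
  replace hupper : p * x ≤ t + 1 := (le_div_iff₀' hp).mp hupper
  have active_hinge : ∀ i ∈ Finset.Icc 2 (t + 1), 0 ≤ 2 * p * x - 2 * ((i : ℝ) - 1) := by
    intro i hi
    have : (i : ℝ) ≤ t + 1 := by exact_mod_cast (Finset.mem_Icc.mp hi).2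
    linarith
  have inactive_hinge : ∀ i ∈ Finset.Icc 2 p, i ∉ Finset.Icc 2 (t + 1) →
      2 * p * x - 2 * ((i : ℝ) - 1) ≤ 0 := by
    intro i hi hi'
    rw [Finset.mem_Icc] at hi hi'
    have : (t : ℝ) + 2 ≤ i := by exact_mod_cast (by lia : t + 2 ≤ i)
    linarith
  rw [sawtooth, max_eq_right (t.cast_nonneg.trans hlower),
    sum_mul_max_zero_eq_sum_of_subset (Finset.Icc_subset_Icc_right ht) _ _
      active_hinge inactive_hinge,
    sawtoothBranch_apply, ← add_sum_alternating_hinges]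
  simp only [mul_assoc]

theorem sawtoothBranch_image_Icc {p : ℕ} (hp : p ≠ 0) (t : ℕ) :
    sawtoothBranch p t '' Icc ((t : ℝ) / p) (((t : ℝ) + 1) / p) = Icc 0 1 := by
  have hp' : (p : ℝ) ≠ 0 := Nat.cast_ne_zero.mpr hp
  have left_value : sawtoothBranch p t (t / p) = (1 - (-1) ^ t) / 2 := by
    rw [sawtoothBranch_apply, mul_div_cancel₀ _ hp']
    ring
  have right_value : sawtoothBranch p t ((t + 1) / p) = (1 + (-1) ^ t) / 2 := by
    rw [sawtoothBranch_apply, mul_div_cancel₀ _ hp']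
    ring
  have hle : (t : ℝ) / p ≤ (t + 1) / p := by gcongr; linarith
  rw [← segment_eq_Icc hle, image_segment, left_value, right_value, segment_eq_uIcc]
  rcases neg_one_pow_eq_or ℝ t with hsign | hsign <;> norm_num [hsign]

/-- The `n`-dimensional sawtooth layer `H_p` is affine on each hypercube
`∏_j [t_j/p, (t_j+1)/p]` (for `t_j ∈ {0, …, p−1}`) and identifies each such hypercube onto
the common image `[0, 1]ⁿ`. -/
theorem sawtoothLayer_affine_and_image (p : ℕ) (hp : 1 ≤ p) (n : ℕ) (hn : 1 ≤ n) :
    ∀ t : Fin n → ℕ, (∀ j, t j ≤ p - 1) →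
      ∃ A : (Fin n → ℝ) →ᵃ[ℝ] (Fin n → ℝ),
        (∀ x ∈ Set.pi Set.univ (fun j => Set.Icc ((t j : ℝ) / p) (((t j : ℝ) + 1) / p)),
          sawtoothLayer p n x = A x) ∧
        sawtoothLayer p n '' Set.pi Set.univ (fun j => Set.Icc ((t j : ℝ) / p) (((t j : ℝ) + 1) / p))
          = Set.pi Set.univ (fun _ => Set.Icc (0 : ℝ) 1) := by
  intro t ht
  have htp (j : Fin n) : t j < p := by have := ht j; lia
  have hbranch (j : Fin n) := sawtooth_eqOn_sawtoothBranch (htp j)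
  refine ⟨AffineMap.pi fun j ↦ (sawtoothBranch p (t j)).comp (AffineMap.proj j),
    fun x hx ↦ funext fun j ↦ hbranch j (hx j trivial), ?_⟩
  calc
    _ = univ.pi fun j ↦ sawtooth p '' Icc ((t j : ℝ) / p) (((t j : ℝ) + 1) / p) :=
      piMap_image_univ_pi (fun _ ↦ sawtooth p) _
    _ = univ.pi fun _ ↦ Icc 0 1 :=
      pi_congr rfl fun j _ ↦ (hbranch j).image_eq.trans
        (sawtoothBranch_image_Icc (Nat.ne_zero_of_lt (htp j)) (t j))
end

section
/- Let p ≥ 2, k ≥ 1, and n ≥ 1 be integers, define h_p : ℝ → ℝ by h_p(x) = max(0, p·x) + Σ_{i=2}^{p} (−1)^{i−1}·max(0, 2p·x − 2(i−1)), and define H_p : ℝⁿ → ℝⁿ coordinatewise by (H_p(x))_j = h_p(x_j). Let H_p^[k] denote the k-fold composition of H_p with itself, and let μ denote Lebesgue measure on ℝⁿ. Then for every measurable set U ⊆ [0, 1]ⁿ with μ(U) > p^{−n·k}, there is no affine map A : ℝⁿ → ℝⁿ such that H_p^[k](x) = A(x) for all x ∈ U. -/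
open MeasureTheory ENNReal

/-!
On `[0, 1]` the sawtooth is `x ↦ T (p * x)`, where `T y` is the distance from `y` to the nearest
even integer. As `T y` is `± y` modulo `2`, and `T` is even and `2`-periodic,
`T (p * T y) = T (p * y)` for every integer `p`. Hence the `k`-fold composition of the layer is
`T (p ^ k * x)` in each coordinate, and after rescaling by `p ^ k` it suffices to treat `T` itself.
On each unit cube with integer corners, coordinatewise `T` is an affine map, and distinct cubes have
distinct affine maps. An affine map can therefore agree with all of `T` on one cube at most; on
every other cube the two agree only inside a proper affine subspace, which is null.
-/

open Set Function Module

section AffineAgreement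

variable {E F : Type*} [NormedAddCommGroup E] [NormedSpace ℝ E] [MeasurableSpace E] [BorelSpace E]
  [FiniteDimensional ℝ E] [AddCommGroup F] [Module ℝ F] (μ : Measure E) [μ.IsAddHaarMeasure]

lemma measure_affineMap_eqLocus_eq_zero {A B : E →ᵃ[ℝ] F} (h : A ≠ B) :
    μ {x | A x = B x} = 0 := by
  let agreement : AffineSubspace ℝ E := (⊥ : Submodule ℝ F).toAffineSubspace.comap (A - B)
  have coe_agreement : {x | A x = B x} = (agreement : Set E) := by
    ext x
    simp [agreement, sub_eq_zero]
  rw [coe_agreement]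
  refine Measure.addHaar_affineSubspace μ agreement fun htop ↦ h ?_
  ext x
  exact (coe_agreement ▸ htop ▸ mem_univ x : x ∈ {x | A x = B x})

lemma measure_setOf_eq_affineMap_le_of_pieces {ι : Type*} [Countable ι] {f : E → F}
    {cell : ι → Set E} {piece : ι → E →ᵃ[ℝ] F} {r : ℝ≥0∞} (piece_injective : Injective piece)
    (eq_piece : ∀ x, ∃ i, x ∈ cell i ∧ f x = piece i x) (measure_cell_le : ∀ i, μ (cell i) ≤ r)
    (A : E →ᵃ[ℝ] F) : μ {x | f x = A x} ≤ r := by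
  have ae_piece_eq : ∀ᵐ x ∂μ, ∀ i, piece i x = A x → piece i = A := by
    refine ae_all_iff.2 fun i ↦ ?_
    by_cases h : piece i = A
    · exact .of_forall fun _ _ ↦ h
    · refine measure_mono_null (fun x hx ↦ ?_) (measure_affineMap_eqLocus_eq_zero μ h)
      exact (Classical.not_imp.1 hx).1
  have ae_mem_cell : ∀ᵐ x ∂μ, f x = A x → ∃ i, x ∈ cell i ∧ piece i = A := by
    filter_upwards [ae_piece_eq] with x hx hfA
    obtain ⟨i, hi, hfi⟩ := eq_piece x
    exact ⟨i, hi, hx i (hfi ▸ hfA)⟩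
  by_cases hA : ∃ i, piece i = A
  · obtain ⟨i, rfl⟩ := hA
    refine (measure_mono_ae ?_).trans (measure_cell_le i)
    filter_upwards [ae_mem_cell] with x hx hfA
    obtain ⟨j, hj, hji⟩ := hx hfA
    exact piece_injective hji ▸ hj
  · have ae_ne : ∀ᵐ x ∂μ, x ∉ {x | f x = A x} :=
      ae_mem_cell.mono fun x hx hfA ↦ hA ((hx hfA).imp fun _ ↦ And.right)
    rw [measure_eq_zero_iff_ae_notMem.2 ae_ne]
    exact zero_le

end AffineAgreement

lemma coe_norm_addCircle_eq_or_eq_neg {c : ℝ} (u : AddCircle c) :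
    ((‖u‖ : ℝ) : AddCircle c) = u ∨ ((‖u‖ : ℝ) : AddCircle c) = -u := by
  induction u using QuotientAddGroup.induction_on with | _ x
  have coe_sub_round : ((x - round (c⁻¹ * x) * c : ℝ) : AddCircle c) = x := by
    rw [AddCircle.coe_sub, ← zsmul_eq_mul, AddCircle.coe_zsmul, AddCircle.coe_period, smul_zero,
      sub_zero]
  rw [AddCircle.norm_eq]
  rcases abs_choice (x - round (c⁻¹ * x) * c) with h | h
  · exact .inl (by rw [h, coe_sub_round])
  · exact .inr (by rw [h, AddCircle.coe_neg, coe_sub_round])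

/-- The triangle wave of period `2`: the distance from `y` to the nearest even integer, encoded as
the norm of the class of `y` modulo `2`. On `[0, 1]`, iterated sawtooths are rescalings of it. -/
noncomputable def triangleWave (y : ℝ) : ℝ := ‖(y : AddCircle (2 : ℝ))‖

lemma triangleWave_mem_Icc (y : ℝ) : triangleWave y ∈ Icc (0 : ℝ) 1 :=
  ⟨norm_nonneg _, by
    simpa [triangleWave] using AddCircle.norm_le_half_period (2 : ℝ) (x := y) two_ne_zero⟩

lemma triangleWave_eq_abs_sub_of_even {y : ℝ} {m : ℤ} (hm : Even m) (hy : |y - m| ≤ 1) :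
    triangleWave y = |y - m| := by
  obtain ⟨r, rfl⟩ := hm
  have coe_sub : ((y - (r + r : ℤ) : ℝ) : AddCircle (2 : ℝ)) = y := by
    rw [← sub_eq_zero, ← AddCircle.coe_sub, AddCircle.coe_eq_zero_iff]
    exact ⟨-r, by push_cast [zsmul_eq_mul]; ring⟩
  rw [triangleWave, ← coe_sub, AddCircle.norm_coe_eq_abs_iff 2 two_ne_zero]
  simpa using hy

lemma triangleWave_of_mem_Icc {x : ℝ} (hx : x ∈ Icc (0 : ℝ) 1) : triangleWave x = x := by
  rw [triangleWave, (AddCircle.norm_coe_eq_abs_iff 2 two_ne_zero).2] <;>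
    simp [abs_of_nonneg hx.1, hx.2]

lemma triangleWave_intCast_mul_triangleWave (m : ℤ) (y : ℝ) :
    triangleWave (m * triangleWave y) = triangleWave (m * y) := by
  have triangleWave_intCast_mul (z : ℝ) :
      triangleWave (m * z) = ‖m • (z : AddCircle (2 : ℝ))‖ := by
    rw [triangleWave, ← zsmul_eq_mul, AddCircle.coe_zsmul]
  rw [triangleWave_intCast_mul, triangleWave_intCast_mul, triangleWave]
  rcases coe_norm_addCircle_eq_or_eq_neg (y : AddCircle (2 : ℝ)) with h | h
  · rw [h]
  · rw [h, smul_neg, norm_neg]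

/-- The affine function that agrees with the triangle wave on `[i, i + 1]`, with slope `1` or `-1`
according to the parity of `i`. -/
noncomputable def triangleWavePiece (i : ℤ) : ℝ →ᵃ[ℝ] ℝ :=
  if Even i then AffineMap.id ℝ ℝ - AffineMap.const ℝ ℝ (i : ℝ)
  else AffineMap.const ℝ ℝ (i + 1 : ℝ) - AffineMap.id ℝ ℝ

lemma triangleWavePiece_apply_of_even {i : ℤ} (hi : Even i) (y : ℝ) :
    triangleWavePiece i y = y - i := by
  simp [triangleWavePiece, hi]

lemma triangleWavePiece_apply_of_odd {i : ℤ} (hi : Odd i) (y : ℝ) :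
    triangleWavePiece i y = i + 1 - y := by
  simp [triangleWavePiece, Int.not_even_iff_odd.2 hi]

lemma triangleWave_eq_triangleWavePiece {i : ℤ} {y : ℝ} (hy : y ∈ Icc (i : ℝ) (i + 1)) :
    triangleWave y = triangleWavePiece i y := by
  obtain ⟨le_y, y_le⟩ := hy
  rcases i.even_or_odd with hi | hi
  · have abs_eq : |y - i| = y - i := abs_of_nonneg (by linarith)
    rw [triangleWavePiece_apply_of_even hi, ← abs_eq]
    exact triangleWave_eq_abs_sub_of_even hi (by linarith)
  · have abs_eq : |y - (i + 1 : ℤ)| = i + 1 - y := by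
      rw [abs_of_nonpos (by push_cast; linarith)]
      push_cast
      ring
    rw [triangleWavePiece_apply_of_odd hi, ← abs_eq]
    exact triangleWave_eq_abs_sub_of_even hi.add_one (by linarith)

lemma triangleWavePiece_injective : Injective triangleWavePiece := by
  intro i j h
  have eq_at_zero := DFunLike.congr_fun h 0
  have eq_at_one := DFunLike.congr_fun h 1
  have cast_eq : (i : ℝ) = j := by
    rcases i.even_or_odd with hi | hi <;> rcases j.even_or_odd with hj | hj <;>
      simp only [triangleWavePiece_apply_of_even, triangleWavePiece_apply_of_odd, hi, hj]
        at eq_at_zero eq_at_one <;> linarith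
  exact_mod_cast cast_eq

lemma triangleWavePiece_succ (q : ℕ) (y : ℝ) :
    triangleWavePiece (q + 1) y =
      triangleWavePiece q y + (-1) ^ (q + 1) * (2 * (y - (q + 1))) := by
  rcases q.even_or_odd with hq | hq
  · have hq' : Even (q : ℤ) := mod_cast hq
    rw [triangleWavePiece_apply_of_even hq', triangleWavePiece_apply_of_odd hq'.add_one,
      hq.add_one.neg_one_pow]
    push_cast
    ring
  · have hq' : Odd (q : ℤ) := mod_cast hq
    rw [triangleWavePiece_apply_of_odd hq', triangleWavePiece_apply_of_even hq'.add_one,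
      hq.add_one.neg_one_pow]
    push_cast
    ring

/-- The ReLU sum defining the sawtooth, in the variable `y = p * x`, with its number `q` of
correction terms decoupled from the slope `p` so that one can induct on it. -/
noncomputable def reluSum (q : ℕ) (y : ℝ) : ℝ :=
  max 0 y + ∑ i ∈ Finset.range q, (-1) ^ (i + 1) * max 0 (2 * (y - (i + 1)))

lemma sawtooth_succ (q : ℕ) (x : ℝ) : sawtooth (q + 1) x = reluSum q ((q + 1 : ℕ) * x) := by
  have reindex : Finset.Icc 2 (q + 1) = (Finset.range q).image (· + 2) := by
    rw [Finset.range_eq_Ico, Finset.image_add_right_Ico]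
    rfl
  rw [sawtooth, reluSum, reindex, Finset.sum_image (by simp)]
  congr! 4 with i
  push_cast
  ring

lemma reluSum_succ (q : ℕ) (y : ℝ) :
    reluSum (q + 1) y = reluSum q y + (-1) ^ (q + 1) * max 0 (2 * (y - (q + 1))) := by
  simp only [reluSum, Finset.sum_range_succ, add_assoc]

lemma reluSum_eq_triangleWavePiece {q : ℕ} {y : ℝ} (hy : q ≤ y) :
    reluSum q y = triangleWavePiece q y := by
  induction q with
  | zero => simpa [reluSum, triangleWavePiece_apply_of_even] using hy
  | succ q ih =>
    push_cast at hy ⊢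
    rw [reluSum_succ, triangleWavePiece_succ, ih (by linarith), max_eq_right (by linarith)]

lemma reluSum_eq_triangleWave {q : ℕ} {y : ℝ} (hy : y ∈ Icc (0 : ℝ) (q + 1)) :
    reluSum q y = triangleWave y := by
  induction q with
  | zero => simpa [reluSum, hy.1] using (triangleWave_of_mem_Icc (by simpa using hy)).symm
  | succ q ih =>
    rcases le_total y (q + 1) with h | h
    · rw [reluSum_succ, max_eq_left (by linarith), mul_zero, add_zero, ih ⟨hy.1, h⟩]
    · rw [reluSum_eq_triangleWavePiece (by exact_mod_cast h)]
      exact (triangleWave_eq_triangleWavePiece ⟨by exact_mod_cast h, hy.2⟩).symm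

lemma sawtooth_eq_triangleWave (p : ℕ) {x : ℝ} (hx : x ∈ Icc (0 : ℝ) 1) :
    sawtooth p x = triangleWave (p * x) := by
  cases p with
  | zero => simp [sawtooth, triangleWave]
  | succ q =>
    have upper : (q + 1 : ℕ) * x ≤ q + 1 := by
      simpa using mul_le_of_le_one_right (q + 1 : ℕ).cast_nonneg hx.2
    rw [sawtooth_succ, reluSum_eq_triangleWave ⟨mul_nonneg (Nat.cast_nonneg _) hx.1, upper⟩]

lemma sawtooth_iterate_eq_triangleWave (p k : ℕ) {x : ℝ} (hx : x ∈ Icc (0 : ℝ) 1) :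
    (sawtooth p)^[k] x = triangleWave (p ^ k * x) := by
  induction k with
  | zero => simp [triangleWave_of_mem_Icc hx]
  | succ k ih =>
    calc (sawtooth p)^[k + 1] x = sawtooth p (triangleWave (p ^ k * x)) := by
          rw [iterate_succ_apply', ih]
      _ = triangleWave (p * triangleWave (p ^ k * x)) :=
          sawtooth_eq_triangleWave p (triangleWave_mem_Icc _)
      _ = triangleWave (p * (p ^ k * x)) := mod_cast triangleWave_intCast_mul_triangleWave p _
      _ = triangleWave (p ^ (k + 1) * x) := by rw [pow_succ', mul_assoc]

lemma sawtoothLayer_iterate_apply (p n k : ℕ) (x : Fin n → ℝ) :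
    (sawtoothLayer p n)^[k] x = (sawtooth p)^[k] ∘ x := by
  induction k with
  | zero => rfl
  | succ k ih =>
    rw [iterate_succ_apply', iterate_succ', ih]
    rfl

section AffineAgreementWithTriangleWave

variable {ι : Type*} [Fintype ι]

lemma volume_setOf_triangleWave_comp_eq_affineMap_le_one (A : (ι → ℝ) →ᵃ[ℝ] (ι → ℝ)) :
    volume {y | triangleWave ∘ y = A y} ≤ 1 := by
  let piece (c : ι → ℤ) : (ι → ℝ) →ᵃ[ℝ] (ι → ℝ) :=
    AffineMap.pi fun j ↦ (triangleWavePiece (c j)).comp (AffineMap.proj j)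
  have piece_injective : Injective piece := by
    intro c d h
    ext j
    refine triangleWavePiece_injective (AffineMap.ext fun t ↦ ?_)
    exact congrFun (DFunLike.congr_fun h fun _ ↦ t) j
  refine measure_setOf_eq_affineMap_le_of_pieces volume piece_injective
    (cell := fun c ↦ Icc (fun j ↦ (c j : ℝ)) (fun j ↦ (c j : ℝ) + 1)) (fun y ↦ ?_) (fun c ↦ ?_) A
  · have floor_mem (j : ι) : y j ∈ Icc (⌊y j⌋ : ℝ) (⌊y j⌋ + 1) :=
      ⟨Int.floor_le _, (Int.lt_floor_add_one _).le⟩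
    refine ⟨fun j ↦ ⌊y j⌋, ⟨fun j ↦ (floor_mem j).1, fun j ↦ (floor_mem j).2⟩, ?_⟩
    ext j
    exact triangleWave_eq_triangleWavePiece (floor_mem j)
  · simp [Real.volume_Icc_pi]

lemma volume_setOf_triangleWave_comp_smul_eq_affineMap_le {M : ℝ} (hM : M ≠ 0)
    (A : (ι → ℝ) →ᵃ[ℝ] (ι → ℝ)) :
    volume {x | triangleWave ∘ (M • x) = A x} ≤ (‖M‖ₑ ^ Fintype.card ι)⁻¹ := by
  let B := A.comp (AffineMap.homothety 0 M⁻¹)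
  have preimage_eq :
      {x | triangleWave ∘ (M • x) = A x} = (M • ·) ⁻¹' {y | triangleWave ∘ y = B y} := by
    ext x
    simp [B, AffineMap.homothety_apply, smul_smul, hM]
  calc volume {x | triangleWave ∘ (M • x) = A x}
      = ENNReal.ofReal |(M ^ finrank ℝ (ι → ℝ))⁻¹| * volume {y | triangleWave ∘ y = B y} := by
        rw [preimage_eq, Measure.addHaar_preimage_smul volume hM]
    _ ≤ ENNReal.ofReal |(M ^ finrank ℝ (ι → ℝ))⁻¹| :=
        mul_le_of_le_one_right' (volume_setOf_triangleWave_comp_eq_affineMap_le_one B)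
    _ = (‖M‖ₑ ^ Fintype.card ι)⁻¹ := by
        rw [finrank_fintype_fun_eq_card, ← Real.enorm_eq_ofReal_abs, enorm_inv (pow_ne_zero _ hM),
          enorm_pow]

end AffineAgreementWithTriangleWave

theorem sawtoothLayer_iterate_not_affine_on_large_sets_general
    (p : ℕ) (hp : p ≠ 0) (k n : ℕ) (A : (Fin n → ℝ) →ᵃ[ℝ] (Fin n → ℝ)) :
    volume {x ∈ Set.pi univ fun _ ↦ Icc (0 : ℝ) 1 | (sawtoothLayer p n)^[k] x = A x} ≤
      ((p : ℝ≥0∞) ^ (n * k))⁻¹ :=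
  calc volume {x ∈ Set.pi univ fun _ ↦ Icc (0 : ℝ) 1 | (sawtoothLayer p n)^[k] x = A x}
      ≤ volume {x | triangleWave ∘ ((p : ℝ) ^ k • x) = A x} := by
        refine measure_mono fun x ⟨hx, hxA⟩ ↦ ?_
        rw [mem_ofPred_eq, ← hxA, sawtoothLayer_iterate_apply]
        ext j
        exact (sawtooth_iterate_eq_triangleWave p k (hx j trivial)).symm
    _ ≤ (‖(p : ℝ) ^ k‖ₑ ^ Fintype.card (Fin n))⁻¹ :=
        volume_setOf_triangleWave_comp_smul_eq_affineMap_le (by positivity) A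
    _ = ((p : ℝ≥0∞) ^ (n * k))⁻¹ := by
        rw [enorm_pow, Real.enorm_natCast, Fintype.card_fin, ← pow_mul, mul_comm k n]

/-- The `k`-fold composition of the `n`-dimensional sawtooth layer `H_p` (with `p ≥ 2`)
agrees with no affine map on any measurable subset of `[0, 1]ⁿ` of Lebesgue measure
exceeding `p^{-n·k}`: its fineness of linear regions is `p^{-n·k}`. -/
theorem sawtoothLayer_iterate_not_affine_on_large_sets
    (p : ℕ) (hp : 2 ≤ p) (k : ℕ) (hk : 1 ≤ k) (n : ℕ) (hn : 1 ≤ n) :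
    ∀ U : Set (Fin n → ℝ), U ⊆ Set.pi Set.univ (fun _ => Set.Icc (0 : ℝ) 1) →
      MeasurableSet U → ((p : ℝ≥0∞) ^ (n * k))⁻¹ < volume U →
      ¬ ∃ A : (Fin n → ℝ) →ᵃ[ℝ] (Fin n → ℝ),
          ∀ x ∈ U, (sawtoothLayer p n)^[k] x = A x := by
  rintro U hU - hvol ⟨A, hA⟩
  refine hvol.not_ge (le_trans (measure_mono ?_)
    (sawtoothLayer_iterate_not_affine_on_large_sets_general p (by omega) k n A))
  exact fun x hx ↦ ⟨hU hx, hA x hx⟩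
end
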